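/- Let q ≥ 1, 2 ≤ s ≤ q+1, and n ≥ 1. Then the maximum number of s-cliques in a K_{q+1}-free simple graph on n vertices equals t_s(n,q), the number of s-cliques of the balanced complete q-partite Turán graph on n vertices. That is, ex(n, K_s, K_{q+1}) = t_s(n,q). -/

import Mathlib

/-- The `i`-th balanced part size of a partition of `n` into `q` parts. -/
def balancedPart (n q : ℕ) (i : Fin q) : ℕ :=
  n / q + if (i : ℕ) < n % q then 1 else 0

/-- `t_s(n,q) = ∑_{S ⊆ [q], |S| = s} ∏_{i ∈ S} n_i`, the number of `s`-cliques of
the balanced complete `q`-partite Turán graph on `n` vertices. -/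
def turanNum (n q s : ℕ) : ℕ :=
  ∑ S ∈ (Finset.univ : Finset (Fin q)).powersetCard s, ∏ i ∈ S, balancedPart n q i

/-!
Let `v` be a vertex lying in as many `(s + 1)`-cliques as possible and let `N` be its
neighbourhood. An `(s + 1)`-clique lies inside `N` or contains a vertex outside `N`, and every
vertex lies in at most as many `(s + 1)`-cliques as `v`, that is, as there are `s`-cliques in `N`.
Since `N` is `K_q`-free, induction on `q` bounds the number of cliques by
`e_{s+1}(M) + (n - |N|) e_s(M) = e_{s+1}(n - |N|, M)`, where `M` lists the balanced part sizes of
`|N|`. Elementary symmetric polynomials grow when two entries are brought closer together, so this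
value is at most the one at the balanced parts of `n`.
-/

open Finset SimpleGraph

section ElementarySymmetric

variable {R : Type*} [CommSemiring R]

lemma esymm_zero_eq_one (M : Multiset R) : M.esymm 0 = 1 := by
  simp [Multiset.esymm]

lemma esymm_cons_succ (a : R) (M : Multiset R) (s : ℕ) :
    (a ::ₘ M).esymm (s + 1) = M.esymm (s + 1) + a * M.esymm s := by
  simp [Multiset.esymm, Multiset.powersetCard_cons, Multiset.sum_map_mul_left]

lemma esymm_cons_cons_le_of_mul_le_mul [PartialOrder R] [CanonicallyOrderedAdd R]
    {a b c d : R} (hadd : a + b = c + d) (hmul : a * b ≤ c * d) (M : Multiset R) (s : ℕ) :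
    (a ::ₘ b ::ₘ M).esymm s ≤ (c ::ₘ d ::ₘ M).esymm s := by
  rcases s with _ | _ | s
  · simp only [esymm_zero_eq_one, le_refl]
  · have expand (x y : R) : (x ::ₘ y ::ₘ M).esymm 1 = M.esymm 1 + (x + y) := by
      rw [esymm_cons_succ, esymm_cons_succ, esymm_zero_eq_one, esymm_zero_eq_one]
      ring
    rw [zero_add, expand, expand, hadd]
  · have expand (x y : R) : (x ::ₘ y ::ₘ M).esymm (s + 2) =
        M.esymm (s + 2) + (x + y) * M.esymm (s + 1) + x * y * M.esymm s := by
      simp only [esymm_cons_succ]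
      ring
    rw [expand, expand, hadd]
    gcongr

end ElementarySymmetric

section BalancedParts

/-- The multiset of part sizes of a balanced partition of `n` into `q` parts. -/
def balancedParts (n q : ℕ) : Multiset ℕ :=
  (univ : Finset (Fin q)).val.map (balancedPart n q)

lemma turanNum_eq_esymm (n q s : ℕ) : turanNum n q s = (balancedParts n q).esymm s :=
  (esymm_map_val ..).symm

@[simp]
lemma turanNum_zero_right (n q : ℕ) : turanNum n q 0 = 1 := by
  simp [turanNum]

lemma turanNum_eq_zero_of_lt (n : ℕ) {q s : ℕ} (hqs : q < s) : turanNum n q s = 0 := by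
  rw [turanNum, powersetCard_eq_empty.mpr (by rwa [card_fin]), sum_empty]

@[simp]
lemma card_balancedParts (n q : ℕ) : (balancedParts n q).card = q := by
  simp [balancedParts]

lemma eq_or_eq_of_mem_balancedParts {n q x : ℕ} (hx : x ∈ balancedParts n q) :
    x = n / q ∨ x = n / q + 1 := by
  obtain ⟨i, -, rfl⟩ := Multiset.mem_map.mp hx
  unfold balancedPart
  split_ifs <;> simp

lemma card_filter_ofNat_eq (n q : ℕ) [NeZero q] (i : Fin q) :
    #{v : Fin n | Fin.ofNat q v = i} = balancedPart n q i := by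
  have hcount := Nat.count_modEq_card n (NeZero.pos q) (i : ℕ)
  rw [Nat.mod_eq_of_lt i.2] at hcount
  rw [balancedPart, ← hcount, Nat.count_eq_card_filter_range, card_filter, card_filter,
    ← Fin.sum_univ_eq_sum_range (fun v ↦ if v ≡ i [MOD q] then 1 else 0) n]
  simp only [Fin.ext_iff, Fin.val_ofNat, Nat.ModEq, Nat.mod_eq_of_lt i.2]

lemma sum_balancedParts (n q : ℕ) [NeZero q] : (balancedParts n q).sum = n := calc
  (balancedParts n q).sum = ∑ i, #{v : Fin n | Fin.ofNat q v = i} := by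
    simp only [card_filter_ofNat_eq]; rfl
  _ = n := by
    rw [← card_eq_sum_card_fiberwise fun _ _ ↦ mem_coe.mpr (mem_univ _), card_fin]

lemma eq_replicate_count_add_replicate_count {α : Type*} [DecidableEq α] {M : Multiset α} {a b : α}
    (hab : a ≠ b) (hM : ∀ x ∈ M, x = a ∨ x = b) :
    M = .replicate (M.count a) a + .replicate (M.count b) b := by
  ext x
  simp only [Multiset.count_add, Multiset.count_replicate]
  by_cases hx : x ∈ M
  · rcases hM x hx with rfl | rfl <;> simp [hab, hab.symm]
  · rw [Multiset.count_eq_zero_of_notMem hx]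
    split_ifs <;> simp_all

lemma eq_of_forall_mem_eq_or_eq_add_one {M M' : Multiset ℕ} {d : ℕ}
    (hM : ∀ x ∈ M, x = d ∨ x = d + 1) (hM' : ∀ x ∈ M', x = d ∨ x = d + 1)
    (hcard : M.card = M'.card) (hsum : M.sum = M'.sum) : M = M' := by
  have hrep := eq_replicate_count_add_replicate_count (Nat.succ_ne_self d).symm hM
  have hrep' := eq_replicate_count_add_replicate_count (Nat.succ_ne_self d).symm hM'
  generalize M.count d = k, M.count (d + 1) = l at hrep
  generalize M'.count d = k', M'.count (d + 1) = l' at hrep'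
  subst hrep hrep'
  simp only [Multiset.card_add, Multiset.card_replicate, Multiset.sum_add, Multiset.sum_replicate,
    smul_eq_mul] at hcard hsum
  obtain rfl : l = l' := by nlinarith
  obtain rfl : k = k' := by lia
  rfl

lemma eq_balancedParts_of_forall_le_add_one {M : Multiset ℕ}
    (hM : ∀ x ∈ M, ∀ y ∈ M, x ≤ y + 1) : M = balancedParts M.sum M.card := by
  rcases eq_or_ne M 0 with rfl | hne
  · rfl
  have : NeZero M.card := ⟨mt Multiset.card_eq_zero.mp hne⟩
  refine eq_of_forall_mem_eq_or_eq_add_one (fun x hx ↦ ?_)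
    (fun x ↦ eq_or_eq_of_mem_balancedParts) (card_balancedParts ..).symm (sum_balancedParts ..).symm
  have hequitable : Set.EquitableOn (univ : Finset M) fun x : M ↦ (x : ℕ) :=
    fun x y _ _ ↦ hM x Multiset.coe_mem y Multiset.coe_mem
  rw [Finset.equitableOn_iff, card_univ, Multiset.card_coe, ← Multiset.sum_eq_sum_coe] at hequitable
  exact hequitable (M.mkToType x ⟨0, Multiset.count_pos.mpr hx⟩) (mem_univ _)

lemma esymm_le_turanNum (M : Multiset ℕ) (s : ℕ) : M.esymm s ≤ turanNum M.sum M.card s := by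
  induction hsq : (M.map (· ^ 2)).sum using Nat.strong_induction_on generalizing M with
  | _ N ih =>
  subst hsq
  by_cases hM : ∀ x ∈ M, ∀ y ∈ M, x ≤ y + 1
  · rw [turanNum_eq_esymm, ← eq_balancedParts_of_forall_le_add_one hM]
  push Not at hM
  obtain ⟨x, hx, y, hy, hyx⟩ := hM
  obtain ⟨M, rfl⟩ := Multiset.exists_cons_of_mem hx
  obtain ⟨M, rfl⟩ := Multiset.exists_cons_of_mem ((Multiset.mem_cons.mp hy).resolve_left (by lia))
  obtain ⟨z, rfl⟩ : ∃ z, x = y + 2 + z := Nat.exists_eq_add_of_le hyx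
  have hsq_lt : (((y + 1 + z) ::ₘ (y + 1) ::ₘ M).map (· ^ 2)).sum <
      (((y + 2 + z) ::ₘ y ::ₘ M).map (· ^ 2)).sum := by
    simp only [Multiset.map_cons, Multiset.sum_cons]
    nlinarith
  calc ((y + 2 + z) ::ₘ y ::ₘ M).esymm s
      ≤ ((y + 1 + z) ::ₘ (y + 1) ::ₘ M).esymm s :=
        esymm_cons_cons_le_of_mul_le_mul (by ring) (by nlinarith) M s
    _ ≤ _ := ih _ hsq_lt _ rfl
    _ = turanNum ((y + 2 + z) ::ₘ y ::ₘ M).sum ((y + 2 + z) ::ₘ y ::ₘ M).card s := by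
        simp only [Multiset.sum_cons, Multiset.card_cons]
        congr 1
        ring

lemma turanNum_add_mul_turanNum_le (a m q s : ℕ) :
    turanNum m q (s + 1) + a * turanNum m q s ≤ turanNum (a + m) (q + 1) (s + 1) := by
  rcases q with _ | q
  · rw [turanNum_eq_zero_of_lt m s.succ_pos, zero_add]
    rcases s with _ | s
    · simp [turanNum, balancedPart, powersetCard_one, Nat.mod_one]
    · rw [turanNum_eq_zero_of_lt m s.succ_pos, mul_zero]
      exact zero_le
  calc turanNum m (q + 1) (s + 1) + a * turanNum m (q + 1) s
      = (a ::ₘ balancedParts m (q + 1)).esymm (s + 1) := by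
        simp only [turanNum_eq_esymm, esymm_cons_succ]
    _ ≤ _ := esymm_le_turanNum _ _
    _ = turanNum (a + m) (q + 1 + 1) (s + 1) := by
        rw [Multiset.sum_cons, sum_balancedParts, Multiset.card_cons, card_balancedParts]

end BalancedParts

section UpperBound

variable {V : Type*} [DecidableEq V] (G : SimpleGraph V) [DecidableRel G.Adj]

/-- The `s`-cliques of `G` contained in `U`. Restricting to a subset, rather than passing to an
induced subgraph, keeps the vertex type fixed in the induction on the clique number. -/
def cliqueFinsetOn (U : Finset V) (s : ℕ) : Finset (Finset V) :=
  {t ∈ U.powersetCard s | G.IsClique t}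

variable {G} {U : Finset V} {s : ℕ}

lemma mem_cliqueFinsetOn {t : Finset V} :
    t ∈ cliqueFinsetOn G U s ↔ t ⊆ U ∧ G.IsNClique s t := by
  rw [cliqueFinsetOn, mem_filter, mem_powersetCard, isNClique_iff, and_assoc, and_comm (b := _ = s)]

lemma cliqueFinsetOn_univ [Fintype V] : cliqueFinsetOn G univ s = G.cliqueFinset s := by
  ext t
  simp only [mem_cliqueFinsetOn, subset_univ, true_and, mem_cliqueFinset_iff]

lemma cliqueFinsetOn_empty_succ : cliqueFinsetOn G ∅ (s + 1) = ∅ := by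
  simp [cliqueFinsetOn]

lemma card_cliqueFinsetOn_zero_le : #(cliqueFinsetOn G U 0) ≤ 1 :=
  (card_filter_le ..).trans (by rw [powersetCard_zero, card_singleton])

variable (G U s) in
lemma card_filter_mem_cliqueFinsetOn_le (v : V) :
    #{t ∈ cliqueFinsetOn G U (s + 1) | v ∈ t} ≤ #(cliqueFinsetOn G {w ∈ U | G.Adj v w} s) := by
  refine card_le_card_of_injOn (·.erase v) (fun t ht ↦ ?_)
    ((erase_injOn' v).mono fun t ht ↦ (mem_filter.mp ht).2)
  obtain ⟨ht, hvt⟩ := mem_filter.mp ht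
  obtain ⟨htU, htG⟩ := mem_cliqueFinsetOn.mp ht
  refine mem_cliqueFinsetOn.mpr ⟨fun w hw ↦ ?_, htG.erase_of_mem hvt⟩
  obtain ⟨hwv, hwt⟩ := mem_erase.mp hw
  exact mem_filter.mpr ⟨htU hwt, htG.isClique hvt hwt hwv.symm⟩

variable (G U s) in
lemma card_cliqueFinsetOn_le_add_sum (N : Finset V) :
    #(cliqueFinsetOn G U s) ≤
      #(cliqueFinsetOn G N s) + ∑ u ∈ U \ N, #{t ∈ cliqueFinsetOn G U s | u ∈ t} := by
  have hcover : cliqueFinsetOn G U s ⊆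
      cliqueFinsetOn G N s ∪ (U \ N).biUnion fun u ↦ {t ∈ cliqueFinsetOn G U s | u ∈ t} := by
    intro t ht
    obtain ⟨htU, htG⟩ := mem_cliqueFinsetOn.mp ht
    by_cases htN : t ⊆ N
    · exact mem_union_left _ (mem_cliqueFinsetOn.mpr ⟨htN, htG⟩)
    · obtain ⟨u, hut, huN⟩ := not_subset.mp htN
      exact mem_union_right _ <| mem_biUnion.mpr
        ⟨u, mem_sdiff.mpr ⟨htU hut, huN⟩, mem_filter.mpr ⟨ht, hut⟩⟩
  exact (card_le_card hcover).trans <|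
    (card_union_le _ _).trans (Nat.add_le_add_left card_biUnion_le _)

variable (G s) in
lemma exists_card_cliqueFinsetOn_succ_le (hU : U.Nonempty) :
    ∃ v ∈ U, #(cliqueFinsetOn G U (s + 1)) ≤
      #(cliqueFinsetOn G {w ∈ U | G.Adj v w} (s + 1)) +
        #(U \ {w ∈ U | G.Adj v w}) * #(cliqueFinsetOn G {w ∈ U | G.Adj v w} s) := by
  obtain ⟨v, hvU, hmax⟩ :=
    exists_max_image U (fun u ↦ #{t ∈ cliqueFinsetOn G U (s + 1) | u ∈ t}) hU
  refine ⟨v, hvU, (card_cliqueFinsetOn_le_add_sum G U (s + 1) {w ∈ U | G.Adj v w}).trans ?_⟩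
  gcongr
  exact sum_le_card_nsmul _ _ _ fun u hu ↦
    (hmax u (mem_sdiff.mp hu).1).trans (card_filter_mem_cliqueFinsetOn_le G U s v)

lemma card_cliqueFinsetOn_le_turanNum {q : ℕ} (hU : G.CliqueFreeOn U (q + 1)) :
    #(cliqueFinsetOn G U s) ≤ turanNum #U q s := by
  induction q generalizing U s with
  | zero =>
    obtain rfl : U = ∅ := eq_empty_of_forall_notMem fun v hv ↦
      hU (singleton_subset_set_iff.mpr hv) (isNClique_singleton.mpr rfl)
    rcases s with _ | s
    · exact card_cliqueFinsetOn_zero_le.trans_eq (turanNum_zero_right ..).symm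
    · simp only [cliqueFinsetOn_empty_succ, card_empty, zero_le]
  | succ q ih =>
    rcases s with _ | s
    · exact card_cliqueFinsetOn_zero_le.trans_eq (turanNum_zero_right ..).symm
    rcases U.eq_empty_or_nonempty with rfl | hne
    · simp only [cliqueFinsetOn_empty_succ, card_empty, zero_le]
    obtain ⟨v, hvU, hle⟩ := exists_card_cliqueFinsetOn_succ_le G s hne
    set N : Finset V := {w ∈ U | G.Adj v w}
    have hN : G.CliqueFreeOn N (q + 1) :=
      (hU.of_succ G hvU).subset G fun w hw ↦ mem_filter.mp hw
    calc #(cliqueFinsetOn G U (s + 1))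
        ≤ #(cliqueFinsetOn G N (s + 1)) + #(U \ N) * #(cliqueFinsetOn G N s) := hle
      _ ≤ turanNum #N q (s + 1) + #(U \ N) * turanNum #N q s := by gcongr <;> exact ih hN
      _ ≤ turanNum (#(U \ N) + #N) (q + 1) (s + 1) := turanNum_add_mul_turanNum_le ..
      _ = turanNum #U (q + 1) (s + 1) := by
          rw [card_sdiff_add_card_eq_card (filter_subset ..)]

lemma card_cliqueFinset_le_turanNum [Fintype V] {q : ℕ} (hG : G.CliqueFree (q + 1)) :
    #(G.cliqueFinset s) ≤ turanNum (Fintype.card V) q s := by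
  rw [← cliqueFinsetOn_univ, ← card_univ]
  exact card_cliqueFinsetOn_le_turanNum hG.cliqueFreeOn

end UpperBound

section CompleteMultipartite

variable {V ι : Type*} [DecidableEq ι]

lemma isNClique_comap_top_iff {c : V → ι} {s : ℕ} {t : Finset V} :
    ((⊤ : SimpleGraph ι).comap c).IsNClique s t ↔ #(t.image c) = s ∧ #t = s := by
  have hclique : ((⊤ : SimpleGraph ι).comap c).IsClique t ↔ Set.InjOn c t := by
    simp only [IsClique, Set.Pairwise, comap_adj, top_adj, Set.InjOn, not_imp_not, ne_eq]
  rw [isNClique_iff, hclique, ← card_image_iff]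
  lia

lemma card_filter_image_eq_and_card_eq [Fintype V] (c : V → ι) (S : Finset ι) :
    #{t : Finset V | t.image c = S ∧ #t = #S} = ∏ i ∈ S, #{v | c v = i} := by
  classical
  -- A set with one vertex of each colour in `S` is the image of a unique section of `c` over `S`.
  let sections : Finset (S → V) := Fintype.piFinset fun i ↦ {v | c v = i}
  have mem_sections {g : S → V} : g ∈ sections ↔ c ∘ g = Subtype.val := by
    simp only [sections, Fintype.mem_piFinset, mem_filter_univ, funext_iff, Function.comp_apply]
  have card_image {g : S → V} (hg : g ∈ sections) : #(univ.image g) = #S := by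
    have hinj : Function.Injective g :=
      .of_comp (f := c) (mem_sections.mp hg ▸ Subtype.val_injective)
    rw [card_image_of_injective _ hinj, card_univ, Fintype.card_coe]
  rw [← prod_coe_sort, ← Fintype.card_piFinset]
  symm
  refine card_bij (fun g _ ↦ univ.image g) (fun g hg ↦ ?_) (fun g hg g' hg' himage ↦ ?_)
    (fun t ht ↦ ?_)
  · refine mem_filter_univ _ |>.mpr ⟨?_, card_image hg⟩
    rw [image_image, mem_sections.mp hg, univ_eq_attach, attach_image_val]
  · funext i
    obtain ⟨j, -, hj⟩ := mem_image.mp (himage ▸ mem_image_of_mem g (mem_univ i))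
    obtain rfl : j = i := Subtype.ext <| by
      rw [← congrFun (mem_sections.mp hg') j, ← congrFun (mem_sections.mp hg) i,
        Function.comp_apply, hj, Function.comp_apply]
    exact hj.symm
  · obtain ⟨himage, hcard⟩ := mem_filter_univ _ |>.mp ht
    have hsection (i : S) : ∃ v ∈ t, c v = i := mem_image.mp (himage ▸ i.2)
    choose g hgt hgc using hsection
    have hg : g ∈ sections := mem_sections.mpr (funext hgc)
    exact ⟨g, hg, eq_of_subset_of_card_le (image_subset_iff.mpr fun i _ ↦ hgt i)
      (hcard.trans (card_image hg).symm).le⟩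

lemma card_cliqueFinset_comap_top [Fintype V] [DecidableEq V] [Fintype ι] (c : V → ι) (s : ℕ) :
    #(((⊤ : SimpleGraph ι).comap c).cliqueFinset s) =
      ∑ S ∈ (univ : Finset ι).powersetCard s, ∏ i ∈ S, #{v | c v = i} := by
  rw [card_eq_sum_card_fiberwise (f := image c) (t := (univ : Finset ι).powersetCard s)]
  · refine sum_congr rfl fun S hS ↦ ?_
    rw [← card_filter_image_eq_and_card_eq, ← (mem_powersetCard.mp hS).2]
    congr 1
    ext t
    simp only [mem_filter, mem_cliqueFinset_iff, isNClique_comap_top_iff, mem_univ, true_and]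
    grind
  · intro t ht
    rw [mem_coe, mem_cliqueFinset_iff, isNClique_comap_top_iff] at ht
    exact mem_coe.mpr <| mem_powersetCard.mpr ⟨subset_univ _, ht.1⟩

end CompleteMultipartite

lemma turanGraph_eq_comap_top (n q : ℕ) [NeZero q] :
    turanGraph n q = (⊤ : SimpleGraph (Fin q)).comap fun v : Fin n ↦ Fin.ofNat q v := by
  ext v w
  simp only [turanGraph_adj, comap_adj, top_adj, ne_eq, Fin.ext_iff, Fin.val_ofNat]

lemma card_cliqueFinset_turanGraph (n q s : ℕ) [NeZero q] :
    #((turanGraph n q).cliqueFinset s) = turanNum n q s := by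
  simp only [turanGraph_eq_comap_top, turanNum, ← card_filter_ofNat_eq]
  convert card_cliqueFinset_comap_top (fun v : Fin n ↦ Fin.ofNat q v) s

/-- for `q ≥ 1` and `2 ≤ s ≤ q+1`, the maximum number of `s`-cliques
of a `K_{q+1}`-free graph on `n` vertices is `t_s(n,q)`:
`ex(n, K_s, K_{q+1}) = t_s(n,q)`. -/
theorem max_cliques_Kqq_free (n q s : ℕ) (hq : 1 ≤ q) (hs : 2 ≤ s)
    (hsq : s ≤ q + 1) (hn : 1 ≤ n) :
    IsGreatest
      {m | ∃ G : SimpleGraph (Fin n), G.CliqueFree (q + 1) ∧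
        m = {t : Finset (Fin n) | G.IsNClique s t}.ncard}
      (turanNum n q s) := by
  have : NeZero q := NeZero.of_pos hq
  have ncard_eq (G : SimpleGraph (Fin n)) [DecidableRel G.Adj] :
      {t : Finset (Fin n) | G.IsNClique s t}.ncard = #(G.cliqueFinset s) := by
    rw [← Set.ncard_coe_finset, coe_cliqueFinset, cliqueSet]
  constructor
  · exact ⟨turanGraph n q, turanGraph_cliqueFree hq,
      by rw [ncard_eq, card_cliqueFinset_turanGraph]⟩
  · rintro m ⟨G, hG, rfl⟩
    classical
    rw [ncard_eq]
    exact (card_cliqueFinset_le_turanNum hG).trans_eq (by rw [Fintype.card_fin])
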